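/- For every T ∈ (0,1), if the partition function Z(T) = ∑_{p ∈ dom U} 2^{-|p|/T} is computable, then T is weakly Chaitin T-random and T-compressible, and hence lim_{n→∞} H(T_n)/n = T. -/

import Mathlib

open Filter

/-- A real number `α` is computable if some total recursive `f : ℕ+ → ℚ`
satisfies `|α - f n| < 1/n` for all `n`. -/
def ComputableReal (α : ℝ) : Prop :=
  ∃ f : ℕ+ → ℚ, Computable f ∧ ∀ n : ℕ+, |α - (f n : ℝ)| < 1 / (n : ℝ)

/-- A partial function on binary strings has prefix-free domain. -/
def PrefixFree (C : List Bool →. List Bool) : Prop :=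
  ∀ p q : List Bool, (C p).Dom → (C q).Dom → p <+: q → p = q

/-- `U` is an optimal prefix-free machine (universal self-delimiting Turing machine). -/
def OptimalMachine (U : List Bool →. List Bool) : Prop :=
  Partrec U ∧ PrefixFree U ∧
    ∀ C : List Bool →. List Bool, Partrec C → PrefixFree C →
      ∃ d : ℕ, ∀ p s, s ∈ C p → ∃ p', s ∈ U p' ∧ p'.length ≤ p.length + d

/-- Program-size (prefix-free Kolmogorov) complexity of `s` with respect to `U`. -/
noncomputable def complexity (U : List Bool →. List Bool) (s : List Bool) : ℕ :=
  sInf {n | ∃ p : List Bool, p.length = n ∧ s ∈ U p}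

/-- The `i`-th bit (0-indexed) of the base-two expansion of the fractional part
of `α`, in the expansion with infinitely many zeros. -/
noncomputable def bitOf (α : ℝ) (i : ℕ) : Bool := decide (⌊Int.fract α * 2 ^ (i + 1)⌋ % 2 = 1)

/-- The first `n` bits of the base-two expansion of `α - ⌊α⌋`
(with infinitely many zeros). -/
noncomputable def firstBits (α : ℝ) (n : ℕ) : List Bool := (List.range n).map (bitOf α)

/-- `α` is weakly Chaitin `T`-random: `∃ c, ∀ n, T·n − c ≤ H(α_n)`. -/
def WeaklyChaitinTRandom (U : List Bool →. List Bool) (T α : ℝ) : Prop :=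
  ∃ c : ℕ, ∀ n : ℕ+, T * (n : ℝ) - (c : ℝ) ≤ (complexity U (firstBits α n) : ℝ)

/-- `α` is `T`-compressible: `limsup H(α_n)/n ≤ T`. -/
def TCompressible (U : List Bool →. List Bool) (T α : ℝ) : Prop :=
  Filter.limsup (fun n : ℕ => (complexity U (firstBits α n) : ℝ) / (n : ℝ)) atTop ≤ T

/-- The partition function `Z(T) = ∑_{p ∈ dom U} 2^{-|p|/T}`. -/
noncomputable def Zfun (U : List Bool →. List Bool) (T : ℝ) : ℝ :=
  ∑' p : {p : List Bool // (U p).Dom}, (2 : ℝ) ^ (-((p : List Bool).length : ℝ) / T)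

/-- The free energy `F(T) = -T log₂ Z(T)`. -/
noncomputable def Ffun (U : List Bool →. List Bool) (T : ℝ) : ℝ :=
  -T * Real.logb 2 (Zfun U T)

/-!
Write `Ω_s(x)` for the contribution to `Z(x)` of the programs that have halted by stage `s`.

Lower bound: `Tₙ` determines a dyadic `x` with `T < x ≤ T + O(2⁻ⁿ)`. Since `Z` is strictly
increasing, `Ω_s(x) > Z(T)` for some `s`, and one can be found because `Z(T)` is computable; since
`Ω_s` is Lipschitz near `T` uniformly in `s`, the weight at `T` still missing there is `O(2⁻ⁿ)`.
A string that is output only later thus has complexity at least `T n - O(1)`, and such a string can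
be computed from `Tₙ`.

Upper bound: `⌈T n⌉` bits of `Z(1)` suffice to find a stage at which the weight missing at `1` is at
most `2^(-T n)`, so that the weight missing at `T` is at most `2⁻ⁿ`. The root of `Ω_s(x) = Z(T)` is
then within `O(2⁻ⁿ)` of `T`, since `Z` has positive slope. A bit string `w` made of `k` blocks of a
fixed length is given to a prefix-free machine as `1ᵏ0w`; this costs `k + 1` extra bits, a fraction
of `n` that becomes negligible as the blocks grow.
-/

open Encodable

/-! ### Computability over the naturals, integers and rationals -/

theorem primrec_pow : Primrec₂ ((· ^ ·) : ℕ → ℕ → ℕ) :=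
  Primrec₂.unpaired'.1 Nat.Primrec.pow

theorem primrec_two_pow : Primrec fun n : ℕ => 2 ^ n :=
  primrec_pow.comp (.const 2) .id

theorem coprime_iff_forall_lt_mod (m n : ℕ) :
    m.Coprime n ↔ ∀ k < m + n + 1, ¬(m % k = 0 ∧ n % k = 0) ∨ k = 1 := by
  simp only [← imp_iff_not_or, ← Nat.dvd_iff_mod_eq_zero]
  refine ⟨fun h k _ hk => Nat.eq_one_of_dvd_coprimes h hk.1 hk.2, fun h => h _ ?_
    ⟨Nat.gcd_dvd_left m n, Nat.gcd_dvd_right m n⟩⟩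
  have hgcd : Nat.gcd m n ∣ m + n := Nat.dvd_add (Nat.gcd_dvd_left m n) (Nat.gcd_dvd_right m n)
  rcases Nat.eq_zero_or_pos (m + n) with h0 | hpos
  · obtain ⟨rfl, rfl⟩ : m = 0 ∧ n = 0 := by omega
    exact Nat.zero_lt_one
  · exact Nat.lt_succ_of_le (Nat.le_of_dvd hpos hgcd)

theorem primrecRel_coprime : PrimrecRel Nat.Coprime := by
  have hmod (f : ℕ × ℕ → ℕ) (hf : Primrec f) :
      PrimrecRel fun (k : ℕ) (x : ℕ × ℕ) => f x % k = 0 :=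
    Primrec.eq.comp (Primrec.nat_mod.comp (hf.comp .snd) .fst) (.const 0)
  have hdiv : PrimrecRel fun (k : ℕ) (x : ℕ × ℕ) => ¬(x.1 % k = 0 ∧ x.2 % k = 0) ∨ k = 1 :=
    ((hmod _ .fst).and (hmod _ .snd)).not.or (Primrec.eq.comp .fst (.const 1))
  have hlt : PrimrecPred fun x : ℕ × ℕ =>
      ∀ k < x.1 + x.2 + 1, ¬(x.1 % k = 0 ∧ x.2 % k = 0) ∨ k = 1 :=
    (hdiv.forall_mem_list.comp (Primrec.list_range.comp (Primrec.succ.comp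
      (Primrec.nat_add.comp .fst .snd))) .id).of_eq fun x => by simp only [List.mem_range, id]
  exact hlt.of_eq fun x => (coprime_iff_forall_lt_mod x.1 x.2).symm

theorem encode_int_add_one_div_two (z : ℤ) : (encode z + 1) / 2 = z.natAbs := by
  rcases z with n | n
  · change (2 * n + 1) / 2 = n
    omega
  · change (2 * n + 1 + 1) / 2 = n + 1
    omega

theorem primrec_int_toNat : Primrec Int.toNat := by
  have heven : PrimrecPred fun z : ℤ => encode z % 2 = 0 :=
    Primrec.eq.comp (Primrec.nat_mod.comp .encode (.const 2)) (.const 0)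
  refine (Primrec.ite heven (Primrec.nat_div.comp .encode (.const 2)) (.const 0)).of_eq ?_
  rintro (n | n)
  · change (if 2 * n % 2 = 0 then 2 * n / 2 else 0) = n
    rw [if_pos (by omega)]
    omega
  · change (if (2 * n + 1) % 2 = 0 then (2 * n + 1) / 2 else 0) = 0
    exact if_neg (by omega)

theorem computable_of_strictMono {h : ℕ → ℕ} (hmono : StrictMono h)
    (hrange : ComputablePred fun x => x ∈ Set.range h) : Computable h := by
  obtain ⟨_, hdec⟩ := hrange
  let isNext : ℕ → ℕ → Bool := fun m x => decide (m < x) && decide (x ∈ Set.range h)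
  have hnext : Partrec fun m => Nat.rfind fun x => Part.some (isNext m x) :=
    Partrec.rfind (Computable₂.partrec₂ (Primrec.and.to_comp.comp
      (Primrec.nat_lt.decide.to_comp.comp .fst .snd) (hdec.comp .snd)))
  refine (Partrec.nat_rec .id (Computable.const (h 0)) ((hnext.comp
    (Computable.snd.comp .snd)).to₂)).of_eq_tot fun n => ?_
  induction n with
  | zero => exact Part.mem_some _
  | succ n ih =>
    refine Part.mem_bind ih (Nat.mem_rfind.2 ⟨?_, fun {m} hm => ?_⟩)
    · simp [isNext, hmono n.lt_succ_self]
    · suffices isNext (h n) m = false by simp [this]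
      rw [Bool.and_eq_false_imp]
      rintro hlt
      rw [decide_eq_false_iff_not]
      rintro ⟨k, rfl⟩
      have := hmono.lt_iff_lt.1 (of_decide_eq_true hlt)
      have := hmono.lt_iff_lt.1 hm
      omega

-- The derived coding of `a` is the rank of `encode a` in the range of `encode`.
theorem exists_strictMono_encode (α : Type*) [Encodable α] [Infinite α] :
    ∃ h : ℕ → ℕ, StrictMono h ∧ Set.range h = Set.range (encode (α := α)) ∧
      ∀ a : α, h ((Denumerable.ofEncodableOfInfinite α).toEncodable.encode a) = encode a := by
  let := decidableRangeEncode α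
  have : Infinite (Set.range (encode (α := α))) :=
    Infinite.of_injective _ (Equiv.ofInjective _ encode_injective).injective
  let D := Denumerable.ofEncodableOfInfinite α
  let h (n : ℕ) : ℕ := Nat.Subtype.ofNat (Set.range (encode (α := α))) n
  have hofNat (n : ℕ) : h n = encode (@Denumerable.ofNat α D n) := by
    have : equivRangeEncode α (@Denumerable.ofNat α D n) =
        Nat.Subtype.ofNat (Set.range (encode (α := α))) n := by
      rw [← Equiv.eq_symm_apply]
      rfl
    exact congrArg Subtype.val this.symm
  have hcode (a : α) : h (D.toEncodable.encode a) = encode a := by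
    rw [hofNat, @Denumerable.ofNat_encode α D a]
  refine ⟨h, strictMono_nat_of_lt_succ fun n => Nat.Subtype.lt_succ_self _, ?_, hcode⟩
  exact Set.Subset.antisymm (Set.range_subset_iff.2 fun n => ⟨_, (hofNat n).symm⟩)
    (Set.range_subset_iff.2 fun a => ⟨_, hcode a⟩)

theorem computable_encode_ofEncodableOfInfinite (α : Type*) [Encodable α] [Infinite α]
    (hrange : ComputablePred fun x => x ∈ Set.range (encode (α := α))) :
    @Computable α ℕ (@Primcodable.ofDenumerable α (.ofEncodableOfInfinite α)) _ encode := by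
  obtain ⟨h, hmono, hh, hcode⟩ := exists_strictMono_encode α
  let D := Denumerable.ofEncodableOfInfinite α
  let P := @Primcodable.ofDenumerable α D
  have hcomp : Computable fun a : α => h (P.toEncodable.encode a) :=
    (computable_of_strictMono hmono (hh ▸ hrange)).comp .encode
  exact hcomp.of_eq hcode

theorem encode_rat (q : ℚ) : @encode ℚ Rat.instEncodable q = Nat.pair (encode q.num) q.den := by
  rcases q with ⟨_, _, _, _⟩
  rfl

theorem mem_range_encode_rat (x : ℕ) : x ∈ Set.range (@encode ℚ Rat.instEncodable) ↔
    0 < x.unpair.2 ∧ Nat.Coprime ((x.unpair.1 + 1) / 2) x.unpair.2 := by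
  constructor
  · rintro ⟨q, rfl⟩
    rw [encode_rat, Nat.unpair_pair, encode_int_add_one_div_two]
    exact ⟨q.den_pos, q.reduced⟩
  · rintro ⟨hden, hcop⟩
    have hnum : encode (Denumerable.ofNat ℤ x.unpair.1) = x.unpair.1 := Denumerable.encode_ofNat _
    rw [← hnum, encode_int_add_one_div_two] at hcop
    exact ⟨⟨_, _, hden.ne', hcop⟩, by rw [encode_rat, hnum, Nat.pair_unpair]⟩

theorem primrecPred_mem_range_encode_rat :
    PrimrecPred fun x => x ∈ Set.range (@encode ℚ Rat.instEncodable) := by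
  have hden : Primrec fun x : ℕ => x.unpair.2 := Primrec.snd.comp .unpair
  have hnum : Primrec fun x : ℕ => (x.unpair.1 + 1) / 2 :=
    Primrec.nat_div.comp (Primrec.succ.comp (Primrec.fst.comp .unpair)) (.const 2)
  exact ((Primrec.nat_lt.comp (.const 0) hden).and (primrecRel_coprime.comp hnum hden)).of_eq
    fun x => (mem_range_encode_rat x).symm

theorem computable_rat_num_den : Computable fun q : ℚ => (q.num, q.den) := by
  have hcode : Computable (@encode ℚ Rat.instEncodable) :=
    computable_encode_ofEncodableOfInfinite ℚ primrecPred_mem_range_encode_rat.computablePred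
  have hdecode : Computable fun x : ℕ => (Denumerable.ofNat ℤ x.unpair.1, x.unpair.2) :=
    (((Primrec.ofNat ℤ).comp (Primrec.fst.comp .unpair)).pair
      (Primrec.snd.comp .unpair)).to_comp
  refine (hdecode.comp hcode).of_eq fun q => ?_
  rw [encode_rat, Nat.unpair_pair, Denumerable.ofNat_encode]

theorem rat_floor_mul_natCast (q : ℚ) (k : ℕ) : ⌊q * k⌋₊ = q.num.toNat * k / q.den := by
  rw [← Nat.floor_div_eq_div (K := ℚ)]
  rcases le_or_gt 0 q.num with hq | hq
  · have hnum : ((q.num.toNat : ℕ) : ℚ) = q.num := by exact_mod_cast Int.toNat_of_nonneg hq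
    rw [Nat.cast_mul, hnum, mul_div_right_comm, Rat.num_div_den]
  · rw [Int.toNat_of_nonpos hq.le, zero_mul, Nat.cast_zero, zero_div, Nat.floor_zero]
    exact Nat.floor_of_nonpos (mul_nonpos_of_nonpos_of_nonneg (Rat.num_neg.1 hq).le k.cast_nonneg)

theorem computable_rat_num : Computable Rat.num :=
  Computable.fst.comp computable_rat_num_den

theorem computable_rat_den : Computable Rat.den :=
  Computable.snd.comp computable_rat_num_den

theorem computable_rat_floor_mul : Computable₂ fun (q : ℚ) (k : ℕ) => ⌊q * k⌋₊ := by
  have hfloor : (fun x : ℚ × ℕ => ⌊x.1 * x.2⌋₊) = fun x => x.1.num.toNat * x.2 / x.1.den :=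
    funext fun x => rat_floor_mul_natCast x.1 x.2
  have hnum : Computable fun x : ℚ × ℕ => x.1.num.toNat :=
    primrec_int_toNat.to_comp.comp (computable_rat_num.comp .fst)
  rw [Computable₂, hfloor]
  exact Primrec.nat_div.to_comp.comp (Primrec.nat_mul.to_comp.comp hnum .snd)
    (computable_rat_den.comp .fst)

theorem computable_succPNat : Computable Nat.succPNat :=
  (Primrec.encode_iff.1 (Primrec.id.of_eq fun _ => rfl)).to_comp

theorem ComputableReal.exists_dyadic_approx {z : ℝ} (hz : ComputableReal z) (hz0 : 0 ≤ z) :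
    ∃ g : ℕ → ℕ, Computable g ∧ ∀ n, |z * 2 ^ n - g n| ≤ 2 := by
  obtain ⟨f, hf, hfz⟩ := hz
  let index (n : ℕ) : ℕ+ := Nat.succPNat (2 ^ n - 1)
  have hindex (n : ℕ) : ((index n : ℕ) : ℝ) = 2 ^ n := by
    have : (index n : ℕ) = 2 ^ n := by
      rw [Nat.succPNat_coe, Nat.succ_eq_add_one, Nat.sub_add_cancel Nat.one_le_two_pow]
    exact_mod_cast this
  refine ⟨fun n => ⌊f (index n) * (2 ^ n : ℕ)⌋₊, ?_, fun n => ?_⟩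
  · exact computable_rat_floor_mul.comp (hf.comp (computable_succPNat.comp
      (Primrec.nat_sub.comp primrec_two_pow (.const 1)).to_comp)) primrec_two_pow.to_comp
  · have hpow : (0 : ℝ) < 2 ^ n := by positivity
    have hclose : |z * 2 ^ n - f (index n) * 2 ^ n| < 1 := by
      rw [← sub_mul, abs_mul, abs_of_pos hpow, ← lt_div_iff₀ hpow, ← hindex n]
      exact hfz _
    have hcast : ⌊f (index n) * (2 ^ n : ℕ)⌋₊ = ⌊(f (index n) : ℝ) * 2 ^ n⌋₊ := by
      rw [← Int.floor_toNat, ← Int.floor_toNat, ← Rat.floor_cast (α := ℝ)]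
      push_cast
      rfl
    beta_reduce
    rw [hcast]
    have hz' : 0 ≤ z * 2 ^ n := by positivity
    generalize (f (index n) : ℝ) * 2 ^ n = y at hclose ⊢
    have hlt := Nat.lt_floor_add_one y
    rw [abs_lt] at hclose
    rw [abs_le]
    rcases le_total 0 y with hy | hy
    · have := Nat.floor_le hy
      constructor <;> linarith
    · rw [Nat.floor_of_nonpos hy, Nat.cast_zero]
      constructor <;> linarith

/-! ### Binary expansions -/

/-- The natural number with the given binary digits, most significant digit first. -/
def ofBits (l : List Bool) : ℕ := l.foldl (fun v b => 2 * v + b.toNat) 0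

/-- The last `n` binary digits of `v`, most significant digit first. -/
def toBits (n v : ℕ) : List Bool :=
  (List.range n).map fun i => decide (v / 2 ^ (n - 1 - i) % 2 = 1)

theorem ofBits_concat (l : List Bool) (b : Bool) : ofBits (l ++ [b]) = 2 * ofBits l + b.toNat := by
  simp only [ofBits, List.foldl_append, List.foldl_cons, List.foldl_nil]

theorem toBits_succ (n v : ℕ) : toBits (n + 1) v = toBits n (v / 2) ++ [decide (v % 2 = 1)] := by
  rw [toBits, List.range_succ, List.map_append]
  congr 1
  · refine List.map_congr_left fun i hi => ?_
    rw [List.mem_range] at hi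
    rw [show n + 1 - 1 - i = n - 1 - i + 1 by omega, pow_succ', Nat.div_div_eq_div_mul]
  · simp

theorem length_toBits (n v : ℕ) : (toBits n v).length = n := by
  rw [toBits, List.length_map, List.length_range]

theorem ofBits_toBits (n v : ℕ) : ofBits (toBits n v) = v % 2 ^ n := by
  induction n generalizing v with
  | zero => exact (Nat.mod_one v).symm
  | succ n ih =>
    rw [toBits_succ, ofBits_concat, ih, pow_succ', Nat.mod_mul]
    rcases Nat.mod_two_eq_zero_or_one v with h | h
    · simp [h]
    · simp [h, add_comm]

theorem ofBits_toBits_of_lt {n v : ℕ} (hv : v < 2 ^ n) : ofBits (toBits n v) = v := by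
  rw [ofBits_toBits, Nat.mod_eq_of_lt hv]

theorem primrec_ofBits : Primrec ofBits :=
  Primrec.list_foldl (h := fun _ (x : ℕ × Bool) => 2 * x.1 + x.2.toNat) .id (.const 0)
    (Primrec.nat_add.comp (Primrec.nat_double.comp (Primrec.fst.comp .snd))
      ((Primrec.dom_finite Bool.toNat).comp (Primrec.snd.comp .snd)))

theorem primrec_toBits : Primrec₂ toBits := by
  have hexp : Primrec fun x : (ℕ × ℕ) × ℕ => x.1.1 - 1 - x.2 :=
    Primrec.nat_sub.comp (Primrec.nat_sub.comp (Primrec.fst.comp .fst) (.const 1)) .snd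
  exact Primrec.list_map (Primrec.list_range.comp .fst) (Primrec.eq.decide.comp
    (Primrec.nat_mod.comp (Primrec.nat_div.comp (Primrec.snd.comp .fst)
      (primrec_two_pow.comp hexp)) (.const 2)) (.const 1))

theorem length_firstBits (α : ℝ) (n : ℕ) : (firstBits α n).length = n := by
  rw [firstBits, List.length_map, List.length_range]

theorem take_firstBits (α : ℝ) {m n : ℕ} (h : m ≤ n) :
    (firstBits α n).take m = firstBits α m := by
  rw [firstBits, ← List.map_take, List.take_range, min_eq_left h, firstBits]

theorem firstBits_eq_toBits (α : ℝ) (n : ℕ) :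
    firstBits α n = toBits n ⌊Int.fract α * 2 ^ n⌋₊ := by
  refine List.map_congr_left fun i hi => ?_
  rw [List.mem_range] at hi
  have hdiv : ⌊Int.fract α * 2 ^ n⌋₊ / 2 ^ (n - 1 - i) = ⌊Int.fract α * 2 ^ (i + 1)⌋₊ := by
    rw [← Nat.floor_div_natCast]
    congr 1
    push_cast
    rw [div_eq_iff (by positivity), mul_assoc, ← pow_add]
    congr 2
    omega
  rw [bitOf, hdiv,
    ← Int.natCast_floor_eq_floor (mul_nonneg (Int.fract_nonneg α) (by positivity))]
  exact decide_eq_decide.2 (by omega)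

theorem floor_mul_two_pow_lt {α : ℝ} (h1 : α < 1) (n : ℕ) : ⌊α * 2 ^ n⌋₊ < 2 ^ n := by
  rw [Nat.floor_lt' (by positivity)]
  push_cast
  exact mul_lt_of_lt_one_left (by positivity) h1

/-- Reads a string `1ᵏ0w` with `|w| = a * k` as the pair `(k, w)`, with `w` read as a number.
The set of all strings of this form is prefix-free. -/
def decodeBlock (a : ℕ) (p : List Bool) : Option (ℕ × ℕ) :=
  let k := p.findIdx (! ·)
  if p.length = k * (a + 1) + 1 then some (k, ofBits (p.drop (k + 1))) else none

theorem primrec_decodeBlock (a : ℕ) : Primrec (decodeBlock a) := by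
  have hk : Primrec fun p : List Bool => p.findIdx (! ·) :=
    Primrec.list_findIdx .id (Primrec.not.comp .snd)
  exact Primrec.ite (Primrec.eq.comp .list_length
      (Primrec.succ.comp (Primrec.nat_mul.comp hk (.const _))))
    (Primrec.option_some.comp (hk.pair (primrec_ofBits.comp
      (Primrec.list_drop.comp (Primrec.succ.comp hk) .id)))) (.const none)

theorem length_of_isSome_decodeBlock {a : ℕ} {p : List Bool} (h : (decodeBlock a p).isSome) :
    p.length = p.findIdx (! ·) * (a + 1) + 1 := by
  by_contra hne
  rw [decodeBlock, if_neg hne] at h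
  exact Bool.false_ne_true h

theorem eq_of_prefix_of_isSome_decodeBlock {a : ℕ} {p q : List Bool}
    (hp : (decodeBlock a p).isSome) (hq : (decodeBlock a q).isSome) (hpq : p <+: q) : p = q := by
  have hp := length_of_isSome_decodeBlock hp
  have hq := length_of_isSome_decodeBlock hq
  have hlt : p.findIdx (! ·) < p.length := by
    rw [hp]
    exact Nat.lt_succ_of_le (Nat.le_mul_of_pos_right _ a.succ_pos)
  have heq : q.findIdx (! ·) = p.findIdx (! ·) := by
    obtain ⟨w, rfl⟩ := hpq
    rw [List.findIdx_append, if_pos hlt]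
  exact hpq.eq_of_length (by rw [hp, hq, heq])

theorem decodeBlock_encode {a k v : ℕ} (hv : v < 2 ^ (a * k)) :
    decodeBlock a (List.replicate k true ++ false :: toBits (a * k) v) = some (k, v) := by
  have hidx (k : ℕ) (w : List Bool) : (List.replicate k true ++ false :: w).findIdx (! ·) = k := by
    induction k with
    | zero => simp [List.findIdx_cons]
    | succ k ih => simp [List.replicate_succ, List.findIdx_cons, ih]
  have hdrop : (List.replicate k true ++ false :: toBits (a * k) v).drop (k + 1) =
      toBits (a * k) v := by
    rw [List.append_cons]
    exact List.drop_left' (by simp)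
  have hlen : (List.replicate k true ++ false :: toBits (a * k) v).length = k * (a + 1) + 1 := by
    simp only [List.length_append, List.length_replicate, List.length_cons, length_toBits]
    ring
  rw [decodeBlock, hidx, if_pos hlen, hdrop, ofBits_toBits_of_lt hv]

/-! ### Prefix-free machines and program-size complexity -/

theorem uniquelyDecodable_of_prefixFree {α : Type*} {S : Set (List α)} (hnil : [] ∉ S)
    (hS : ∀ p ∈ S, ∀ q ∈ S, p <+: q → p = q) : InformationTheory.UniquelyDecodable S := by
  intro L₁
  have head_mem {a : List α} {L : List (List α)} (h : ∀ w ∈ a :: L, w ∈ S) : a ∈ S :=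
    h a List.mem_cons_self
  have flatten_ne_nil {a : List α} {L : List (List α)} (h : ∀ w ∈ a :: L, w ∈ S) :
      (a :: L).flatten ≠ [] := fun h0 =>
    hnil ((List.append_eq_nil_iff.1 h0).1 ▸ head_mem h)
  induction L₁ with
  | nil =>
    rintro (_ | ⟨b, L₂⟩) _ h₂ h
    · rfl
    · exact absurd h.symm (flatten_ne_nil h₂)
  | cons a L₁ ih =>
    rintro (_ | ⟨b, L₂⟩) h₁ h₂ h
    · exact absurd h (flatten_ne_nil h₁)
    · rw [List.flatten_cons, List.flatten_cons] at h
      obtain rfl : a = b := by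
        rcases List.prefix_or_prefix_of_prefix ⟨_, rfl⟩ ⟨_, h.symm⟩ with hab | hba
        · exact hS a (head_mem h₁) b (head_mem h₂) hab
        · exact (hS b (head_mem h₂) a (head_mem h₁) hba).symm
      rw [ih L₂ (fun w hw => h₁ w (List.mem_cons_of_mem a hw))
        (fun w hw => h₂ w (List.mem_cons_of_mem a hw)) (List.append_cancel_left h)]

theorem kraft_inequality_of_prefixFree {S : Finset (List Bool)}
    (hS : ∀ p ∈ S, ∀ q ∈ S, p <+: q → p = q) : ∑ p ∈ S, (1 / 2 : ℝ) ^ p.length ≤ 1 := by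
  by_cases hnil : [] ∈ S
  · have hsingleton : S = {[]} := Finset.eq_singleton_iff_unique_mem.2
      ⟨hnil, fun q hq => (hS _ hnil q hq List.nil_prefix).symm⟩
    simp [hsingleton]
  · simpa using InformationTheory.kraft_mcmillan_inequality
      (uniquelyDecodable_of_prefixFree (S := (S : Set (List Bool))) hnil hS)

theorem PrefixFree.sum_dom_le_one {U : List Bool →. List Bool} (hU : PrefixFree U)
    (F : Finset U.Dom) : ∑ p ∈ F, (1 / 2 : ℝ) ^ p.1.length ≤ 1 := by
  have hkraft : ∑ p ∈ F.map (.subtype _), (1 / 2 : ℝ) ^ p.length ≤ 1 := by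
    refine kraft_inequality_of_prefixFree ?_
    simp only [Finset.mem_map, Function.Embedding.subtype_apply]
    rintro _ ⟨p, -, rfl⟩ _ ⟨q, -, rfl⟩ hpq
    exact hU p q p.2 q.2 hpq
  rwa [Finset.sum_map] at hkraft

theorem complexity_le {U : List Bool →. List Bool} {s p : List Bool} (h : s ∈ U p) :
    complexity U s ≤ p.length :=
  Nat.sInf_le ⟨p, rfl, h⟩

namespace OptimalMachine

variable {U : List Bool →. List Bool}

-- The block coding turns an arbitrary partial recursive function into a prefix-free machine.
theorem exists_program_of_partrec_block (hU : OptimalMachine U) (a : ℕ)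
    {F : ℕ × ℕ →. List Bool} (hF : Partrec F) :
    ∃ d, ∀ k v s, v < 2 ^ (a * k) → s ∈ F (k, v) →
      ∃ p, s ∈ U p ∧ p.length ≤ k * (a + 1) + d := by
  let C : List Bool →. List Bool := fun p => (decodeBlock a p : Part (ℕ × ℕ)).bind F
  have hC : Partrec C := (primrec_decodeBlock a).to_comp.ofOption.bind (hF.comp Computable.snd).to₂
  have hprefix : PrefixFree C := fun p q hp hq hpq =>
    eq_of_prefix_of_isSome_decodeBlock (by simpa using hp.1) (by simpa using hq.1) hpq
  obtain ⟨d, hd⟩ := hU.2.2 C hC hprefix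
  refine ⟨d + 1, fun k v s hv hs => ?_⟩
  have hcode : (k, v) ∈ (decodeBlock a (List.replicate k true ++ false :: toBits (a * k) v) :
      Part (ℕ × ℕ)) := by
    rw [decodeBlock_encode hv]
    exact Part.mem_some _
  obtain ⟨p, hp, hlen⟩ := hd _ s (Part.mem_bind hcode hs)
  refine ⟨p, hp, hlen.trans_eq ?_⟩
  simp only [List.length_append, List.length_replicate, List.length_cons, length_toBits]
  ring

theorem exists_mem (hU : OptimalMachine U) (s : List Bool) : ∃ p, s ∈ U p := by
  obtain ⟨d, hd⟩ := hU.exists_program_of_partrec_block 0 (Computable.const s).partrec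
  obtain ⟨p, hp, -⟩ := hd 0 0 s Nat.one_pos (Part.mem_some s)
  exact ⟨p, hp⟩

theorem exists_length_eq_complexity (hU : OptimalMachine U) (s : List Bool) :
    ∃ p, p.length = complexity U s ∧ s ∈ U p := by
  obtain ⟨p, hp⟩ := hU.exists_mem s
  exact Nat.sInf_mem (s := {n | ∃ p : List Bool, p.length = n ∧ s ∈ U p}) ⟨_, p, rfl, hp⟩

theorem exists_dom_length_pos (hU : OptimalMachine U) : ∃ p : U.Dom, 1 ≤ p.1.length := by
  obtain ⟨p, hp⟩ := hU.exists_mem []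
  obtain ⟨q, hq⟩ := hU.exists_mem [true]
  by_contra! hempty
  have hnil (r : List Bool) (hr : (U r).Dom) : r = [] :=
    List.length_eq_zero_iff.1 (Nat.lt_one_iff.1 (hempty ⟨r, hr⟩))
  obtain rfl := hnil p (Part.dom_iff_mem.2 ⟨_, hp⟩)
  obtain rfl := hnil q (Part.dom_iff_mem.2 ⟨_, hq⟩)
  exact List.cons_ne_nil _ _ (Part.mem_unique hq hp)

theorem exists_complexity_le_of_partrec (hU : OptimalMachine U) {F : List Bool →. List Bool}
    (hF : Partrec F) : ∃ d, ∀ s t, t ∈ F s → complexity U t ≤ complexity U s + d := by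
  have hprefix : PrefixFree fun p => (U p).bind F :=
    fun p q hp hq hpq => hU.2.1 p q hp.1 hq.1 hpq
  obtain ⟨d, hd⟩ := hU.2.2 _ (hU.1.bind (hF.comp Computable.snd).to₂) hprefix
  refine ⟨d, fun s t ht => ?_⟩
  obtain ⟨p, hlen, hp⟩ := hU.exists_length_eq_complexity s
  obtain ⟨q, hq, hqlen⟩ := hd p t (Part.mem_bind hp ht)
  exact (complexity_le hq).trans (hlen ▸ hqlen)

end OptimalMachine

/-! ### Boltzmann weights -/

/-- The Boltzmann factor `2^(-l/T)` of a program of length `l` at temperature `T`. -/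
noncomputable def weight (T : ℝ) (l : ℕ) : ℝ := 2 ^ (-(l : ℝ) / T)

section Weight

variable {x y : ℝ}

theorem weight_pos (x : ℝ) (l : ℕ) : 0 < weight x l := Real.rpow_pos_of_pos two_pos _

theorem weight_one (l : ℕ) : weight 1 l = (1 / 2) ^ l := by
  rw [weight, div_one, Real.rpow_neg two_pos.le, Real.rpow_natCast, one_div, inv_pow]

theorem weight_eq_rpow (hy : y ≠ 0) (l : ℕ) : weight x l = weight y l ^ (y / x) := by
  rw [weight, weight, ← Real.rpow_mul two_pos.le, div_mul_div_cancel₀ hy]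

theorem weight_eq_mul (x y : ℝ) (l : ℕ) :
    weight x l = weight y l * 2 ^ (-(l * (1 / x - 1 / y))) := by
  rw [weight, weight, ← Real.rpow_add two_pos]
  congr 1
  ring

theorem weight_le_weight (hx : 0 < x) (hxy : x ≤ y) (l : ℕ) : weight x l ≤ weight y l := by
  refine Real.rpow_le_rpow_of_exponent_le one_le_two ?_
  rw [neg_div, neg_div, neg_le_neg_iff]
  exact div_le_div_of_nonneg_left l.cast_nonneg hx hxy

theorem one_add_mul_log_le_rpow {b : ℝ} (hb : 0 < b) (u : ℝ) : 1 + u * Real.log b ≤ b ^ u := by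
  rw [Real.rpow_def_of_pos hb, mul_comm u, add_comm]
  exact Real.add_one_le_exp _

theorem exists_mul_weight_le (hx : 0 < x) (hxy : x < y) :
    ∃ C > 0, ∀ l : ℕ, l * weight x l ≤ C * weight y l := by
  have hgap : 0 < (1 / x - 1 / y) * Real.log 2 :=
    mul_pos (sub_pos.2 (one_div_lt_one_div_of_lt hx hxy)) (Real.log_pos one_lt_two)
  refine ⟨((1 / x - 1 / y) * Real.log 2)⁻¹, inv_pos.2 hgap, fun l => ?_⟩
  have hexp := one_add_mul_log_le_rpow two_pos (l * (1 / x - 1 / y))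
  rw [weight_eq_mul x y, Real.rpow_neg two_pos.le, mul_comm _ (weight y l), mul_left_comm]
  refine mul_le_mul_of_nonneg_left ?_ (weight_pos y l).le
  rw [← div_eq_mul_inv, inv_eq_one_div, div_le_div_iff₀ (by positivity) hgap]
  linarith

theorem weight_sub_le (hx : 0 < x) (hxy : x ≤ y) (l : ℕ) :
    weight y l - weight x l ≤ (1 / x - 1 / y) * (l * weight y l) := by
  have hu : 0 ≤ l * (1 / x - 1 / y) :=
    mul_nonneg l.cast_nonneg (sub_nonneg.2 (one_div_le_one_div_of_le hx hxy))
  have hlog : l * (1 / x - 1 / y) * Real.log 2 ≤ l * (1 / x - 1 / y) :=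
    mul_le_of_le_one_right hu (by linarith [Real.log_two_lt_d9])
  have hpow : 1 - (2 : ℝ) ^ (-(l * (1 / x - 1 / y))) ≤ l * (1 / x - 1 / y) := by
    linarith [one_add_mul_log_le_rpow two_pos (-(l * (1 / x - 1 / y)))]
  rw [weight_eq_mul x y]
  linarith [mul_le_mul_of_nonneg_left hpow (weight_pos y l).le]

theorem exists_weight_sub_le {t : ℝ} (hx : 0 < x) (hxy : x < y) (hyt : y < t) :
    ∃ C > 0, ∀ u v, x ≤ u → u ≤ v → v ≤ y → ∀ l,
      weight v l - weight u l ≤ C * (v - u) * weight t l := by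
  obtain ⟨C, hC, hCl⟩ := exists_mul_weight_le (hx.trans hxy) hyt
  refine ⟨1 / (x * x) * C, by positivity, fun u v hu huv hv l => ?_⟩
  have hu0 : 0 < u := hx.trans_le hu
  have hv0 : 0 < v := hu0.trans_le huv
  have hinv : 1 / u - 1 / v ≤ 1 / (x * x) * (v - u) := by
    rw [div_sub_div 1 1 hu0.ne' hv0.ne', one_mul, mul_one, div_eq_mul_one_div, mul_comm]
    refine mul_le_mul_of_nonneg_right (one_div_le_one_div_of_le (by positivity) ?_)
      (sub_nonneg.2 huv)
    exact mul_le_mul hu (hu.trans huv) hx.le hu0.le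
  calc weight v l - weight u l
      ≤ (1 / u - 1 / v) * (l * weight v l) := weight_sub_le hu0 huv l
    _ ≤ (1 / (x * x) * (v - u)) * (C * weight t l) := by
        have hv' : l * weight v l ≤ C * weight t l :=
          (mul_le_mul_of_nonneg_left (weight_le_weight hv0 hv l) l.cast_nonneg).trans (hCl l)
        exact mul_le_mul hinv hv' (mul_nonneg l.cast_nonneg (weight_pos v l).le)
          (mul_nonneg (by positivity) (sub_nonneg.2 huv))
    _ = 1 / (x * x) * C * (v - u) * weight t l := by ring

theorem le_weight_sub {l : ℕ} (hl : 1 ≤ l) (hx : 0 < x) (hxy : x ≤ y) (hy : y ≤ 1) :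
    weight y l / 2 * (y - x) ≤ weight y l - weight x l := by
  have hgap : y - x ≤ l * (1 / x - 1 / y) := by
    have hy0 : 0 < y := hx.trans_le hxy
    have hdiff : y - x ≤ 1 / x - 1 / y := by
      rw [div_sub_div 1 1 hx.ne' hy0.ne', one_mul, mul_one]
      exact le_div_self (sub_nonneg.2 hxy) (by positivity)
        (mul_le_one₀ (hxy.trans hy) hy0.le hy)
    exact hdiff.trans
      (le_mul_of_one_le_left ((sub_nonneg.2 hxy).trans hdiff) (by exact_mod_cast hl))
  have hbernoulli : (2 : ℝ) ^ (-(y - x)) ≤ 1 - (y - x) / 2 := by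
    have := rpow_one_add_le_one_add_mul_self (s := -(1 / 2)) (p := y - x) (by norm_num)
      (sub_nonneg.2 hxy) (by linarith)
    rw [show (1 : ℝ) + -(1 / 2) = 2⁻¹ by norm_num, Real.inv_rpow two_pos.le,
      ← Real.rpow_neg two_pos.le] at this
    linarith
  have hpow : (2 : ℝ) ^ (-(l * (1 / x - 1 / y))) ≤ 1 - (y - x) / 2 :=
    (Real.rpow_le_rpow_of_exponent_le one_le_two (neg_le_neg hgap)).trans hbernoulli
  rw [weight_eq_mul x y]
  linarith [mul_le_mul_of_nonneg_left hpow (weight_pos y l).le]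

end Weight

theorem tsum_rpow_le_rpow {ι : Type*} {a : ι → ℝ} {A p : ℝ} (ha : ∀ i, 0 ≤ a i)
    (hsum : Summable a) (hA : ∑' i, a i ≤ A) (hp : 1 ≤ p) :
    Summable (fun i => a i ^ p) ∧ ∑' i, a i ^ p ≤ A ^ p := by
  have hA0 : 0 ≤ A := (tsum_nonneg ha).trans hA
  have hp0 : 0 ≤ p - 1 := sub_nonneg.2 hp
  have split {b : ℝ} (hb : 0 ≤ b) : b ^ p = b * b ^ (p - 1) := by
    rw [← Real.rpow_one_add' hb (by linarith), add_sub_cancel]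
  have hterm (i : ι) : a i ^ p ≤ a i * A ^ (p - 1) := by
    rw [split (ha i)]
    exact mul_le_mul_of_nonneg_left (Real.rpow_le_rpow (ha i)
      ((hsum.le_tsum i fun j _ => ha j).trans hA) hp0) (ha i)
  have hsummable : Summable fun i => a i ^ p :=
    (hsum.mul_right _).of_nonneg_of_le (fun i => Real.rpow_nonneg (ha i) p) hterm
  refine ⟨hsummable, ?_⟩
  calc ∑' i, a i ^ p ≤ ∑' i, a i * A ^ (p - 1) := hsummable.tsum_le_tsum hterm (hsum.mul_right _)
    _ = (∑' i, a i) * A ^ (p - 1) := tsum_mul_right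
    _ ≤ A * A ^ (p - 1) := mul_le_mul_of_nonneg_right hA (Real.rpow_nonneg hA0 _)
    _ = A ^ p := (split hA0).symm

section PartitionSum

variable {ι : Type*} {ℓ : ι → ℕ} {x y : ℝ}

theorem tsum_weight_le_weight (hx : 0 < x) (hxy : x ≤ y)
    (hsum : Summable fun i => weight y (ℓ i)) {m : ℕ} (hm : ∑' i, weight y (ℓ i) ≤ weight y m) :
    ∑' i, weight x (ℓ i) ≤ weight x m := by
  have hy : y ≠ 0 := (hx.trans_le hxy).ne'
  simp only [weight_eq_rpow (x := x) hy]
  exact (tsum_rpow_le_rpow (fun i => (weight_pos y _).le) hsum hm ((one_le_div hx).2 hxy)).2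

theorem summable_weight_of_le (hx : 0 < x) (hxy : x ≤ y)
    (hsum : Summable fun i => weight y (ℓ i)) : Summable fun i => weight x (ℓ i) :=
  hsum.of_nonneg_of_le (fun _ => (weight_pos x _).le) fun i => weight_le_weight hx hxy (ℓ i)

theorem tsum_weight_le_sum_add_weight (hx : 0 < x) (hxy : x ≤ y)
    (hsum : Summable fun i => weight y (ℓ i)) {F : Finset ι} {m : ℕ}
    (hm : ∑' i, weight y (ℓ i) ≤ ∑ i ∈ F, weight y (ℓ i) + weight y m) :
    ∑' i, weight x (ℓ i) ≤ ∑ i ∈ F, weight x (ℓ i) + weight x m := by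
  rw [← hsum.sum_add_tsum_subtype_compl F, add_le_add_iff_left] at hm
  rw [← (summable_weight_of_le hx hxy hsum).sum_add_tsum_subtype_compl F, add_le_add_iff_left]
  exact tsum_weight_le_weight hx hxy (hsum.subtype _) hm

theorem exists_mul_sub_le_tsum_weight_sub (hsum : Summable fun i => weight y (ℓ i)) (hy : y ≤ 1)
    {i : ι} (hi : 1 ≤ ℓ i) : ∃ κ > 0, ∀ x, 0 < x → x ≤ y →
      κ * (y - x) ≤ ∑' i, weight y (ℓ i) - ∑' i, weight x (ℓ i) := by
  refine ⟨weight y (ℓ i) / 2, half_pos (weight_pos y _), fun x hx hxy => ?_⟩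
  have hsum' := summable_weight_of_le hx hxy hsum
  rw [← hsum.tsum_sub hsum']
  exact (le_weight_sub hi hx hxy hy).trans ((hsum.sub hsum').le_tsum i
    fun j _ => sub_nonneg.2 (weight_le_weight hx hxy (ℓ j)))

theorem tsum_weight_lt_tsum_weight (hsum : Summable fun i => weight y (ℓ i)) (hy : y ≤ 1)
    {i : ι} (hi : 1 ≤ ℓ i) (hx : 0 < x) (hxy : x < y) :
    ∑' i, weight x (ℓ i) < ∑' i, weight y (ℓ i) := by
  obtain ⟨κ, hκ, hle⟩ := exists_mul_sub_le_tsum_weight_sub hsum hy hi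
  exact sub_pos.1 ((mul_pos hκ (sub_pos.2 hxy)).trans_le (hle x hx hxy.le))

end PartitionSum

theorem Zfun_eq_tsum_weight (U : List Bool →. List Bool) (x : ℝ) :
    Zfun U x = ∑' p : U.Dom, weight x p.1.length := rfl

theorem PrefixFree.sum_weight_le_one {U : List Bool →. List Bool} (hU : PrefixFree U)
    (F : Finset U.Dom) : ∑ p ∈ F, weight 1 p.1.length ≤ 1 := by
  simpa only [weight_one] using hU.sum_dom_le_one F

theorem PrefixFree.summable_weight {U : List Bool →. List Bool} (hU : PrefixFree U) {x : ℝ}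
    (hx : 0 < x) (hx1 : x ≤ 1) : Summable fun p : U.Dom => weight x p.1.length :=
  summable_weight_of_le hx hx1
    (summable_of_sum_le (fun _ => (weight_pos 1 _).le) hU.sum_weight_le_one)

/-! ### Stage-wise enumeration of a machine -/

/-- A primitive recursive exhaustion of the graph of `U`: the list `E s` holds the pairs
(program, output) of the computations of `U` found to halt by stage `s`. -/
structure StageEnumeration (U : List Bool →. List Bool)
    (E : ℕ → List (List Bool × List Bool)) : Prop where
  primrec : Primrec E
  length_le (s : ℕ) : (E s).length ≤ s
  nodup (s : ℕ) : ((E s).map Prod.fst).Nodup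
  sound {s : ℕ} {p o : List Bool} : (p, o) ∈ E s → o ∈ U p
  complete {p o : List Bool} : o ∈ U p → ∀ᶠ s in atTop, (p, o) ∈ E s

/-- The pair (program, output) of the program with code `n`, if `c` halts on it within `s` steps. -/
def haltedRun (c : Nat.Partrec.Code) (s n : ℕ) : Option (List Bool × List Bool) :=
  (decode₂ (List Bool) n).bind fun p =>
    ((c.evaln s n).bind (decode (α := List Bool))).map fun o => (p, o)

theorem primrec_haltedRun (c : Nat.Partrec.Code) : Primrec₂ (haltedRun c) := by
  refine Primrec.option_bind (Primrec.decode₂.comp Primrec.snd) (Primrec.option_map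
    (Primrec.option_bind ?_ (Primrec.decode.comp Primrec.snd)) ?_)
  · exact Nat.Partrec.Code.primrec_evaln.comp (((Primrec.fst.comp Primrec.fst).pair
      (Primrec.const c)).pair (Primrec.snd.comp Primrec.fst))
  · exact (Primrec.snd.comp Primrec.fst).pair Primrec.snd

theorem haltedRun_eq_some {c : Nat.Partrec.Code} {s n : ℕ} {p o : List Bool} :
    haltedRun c s n = some (p, o) ↔
      encode p = n ∧ ∃ k ∈ c.evaln s n, decode (α := List Bool) k = some o := by
  simp only [haltedRun, Option.bind_eq_some_iff, Option.map_eq_some_iff, Prod.mk.injEq,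
    decode₂_eq_some, Option.mem_def]
  constructor
  · rintro ⟨p, hp, o, ho, rfl, rfl⟩
    exact ⟨hp, ho⟩
  · rintro ⟨hp, ho⟩
    exact ⟨p, hp, o, ho, rfl, rfl⟩

theorem encode_mem_eval_iff {U : List Bool →. List Bool} {c : Nat.Partrec.Code}
    (hc : c.eval = fun n => Part.bind (decode (α := List Bool) n) fun p => (U p).map encode)
    {p o : List Bool} : encode o ∈ c.eval (encode p) ↔ o ∈ U p := by
  simp only [hc, encodek, Part.coe_some, Part.bind_some, Part.mem_map_iff, encode_inj,
    exists_eq_right]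

theorem exists_stageEnumeration {U : List Bool →. List Bool} (hU : Partrec U) :
    ∃ E, StageEnumeration U E := by
  obtain ⟨c, hc⟩ := Nat.Partrec.Code.exists_code.1 hU
  refine ⟨fun s => (List.range s).filterMap (haltedRun c s),
    Primrec.listFilterMap Primrec.list_range (primrec_haltedRun c),
    fun s => (List.length_filterMap_le _ _).trans_eq List.length_range, fun s => ?_, ?_, ?_⟩
  · rw [List.map_filterMap]
    refine List.Nodup.filterMap (fun n n' p hn hn' => ?_) List.nodup_range
    obtain ⟨⟨p, o⟩, ho, rfl⟩ := Option.map_eq_some_iff.1 hn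
    obtain ⟨⟨p', o'⟩, ho', rfl⟩ := Option.map_eq_some_iff.1 hn'
    rw [← (haltedRun_eq_some.1 ho).1, ← (haltedRun_eq_some.1 ho').1]
  · intro s p o h
    obtain ⟨n, -, h⟩ := List.mem_filterMap.1 h
    obtain ⟨rfl, k, hk, ho⟩ := haltedRun_eq_some.1 h
    obtain ⟨o', ho', rfl⟩ : ∃ o' ∈ U p, encode o' = k := by
      simpa only [hc, encodek, Part.coe_some, Part.bind_some, Part.mem_map_iff] using
        Nat.Partrec.Code.evaln_sound hk
    rwa [← Option.some.inj ((encodek o').symm.trans ho)]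
  · intro p o h
    obtain ⟨k, hk⟩ := Nat.Partrec.Code.evaln_complete.1 ((encode_mem_eval_iff hc).2 h)
    filter_upwards [eventually_ge_atTop k] with s hs
    have hrun := Nat.Partrec.Code.evaln_mono hs hk
    exact List.mem_filterMap.2 ⟨encode p, List.mem_range.2 (Nat.Partrec.Code.evaln_bound hrun),
      haltedRun_eq_some.2 ⟨rfl, _, hrun, encodek o⟩⟩

open Classical in
/-- The programs of `U` found to halt by stage `s`. -/
noncomputable def haltedPrograms (U : List Bool →. List Bool)
    (E : ℕ → List (List Bool × List Bool)) (s : ℕ) : Finset U.Dom :=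
  ((E s).map Prod.fst).toFinset.subtype (· ∈ U.Dom)

/-- The stage `s` approximation to `Z(x)`, which sums over the programs halted by then. -/
noncomputable def stageZ (U : List Bool →. List Bool) (E : ℕ → List (List Bool × List Bool))
    (s : ℕ) (x : ℝ) : ℝ :=
  ∑ p ∈ haltedPrograms U E s, weight x p.1.length

theorem stageZ_le_stageZ (U : List Bool →. List Bool) (E : ℕ → List (List Bool × List Bool))
    (s : ℕ) {x y : ℝ} (hx : 0 < x) (hxy : x ≤ y) : stageZ U E s x ≤ stageZ U E s y :=
  Finset.sum_le_sum fun _ _ => weight_le_weight hx hxy _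

theorem PrefixFree.stageZ_le_Zfun {U : List Bool →. List Bool} (hU : PrefixFree U)
    (E : ℕ → List (List Bool × List Bool)) (s : ℕ) {x : ℝ} (hx : 0 < x) (hx1 : x ≤ 1) :
    stageZ U E s x ≤ Zfun U x := by
  rw [Zfun_eq_tsum_weight]
  exact (hU.summable_weight hx hx1).sum_le_tsum _ fun _ _ => (weight_pos x _).le

namespace StageEnumeration

variable {U : List Bool →. List Bool} {E : ℕ → List (List Bool × List Bool)}

theorem mem_haltedPrograms {s : ℕ} {p : U.Dom} :
    p ∈ haltedPrograms U E s ↔ ∃ o, (p.1, o) ∈ E s := by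
  simp [haltedPrograms]

theorem tendsto_haltedPrograms (hE : StageEnumeration U E) :
    Tendsto (haltedPrograms U E) atTop atTop := by
  refine tendsto_atTop.2 fun F => ?_
  filter_upwards [(eventually_all_finset F).2 fun p _ => hE.complete (Part.get_mem p.2)]
    with s hs p hp
  exact mem_haltedPrograms.2 ⟨_, hs p hp⟩

theorem exists_lt_stageZ (hE : StageEnumeration U E) (hU : PrefixFree U) {c x : ℝ} (hx : 0 < x)
    (hx1 : x ≤ 1) (hc : c < Zfun U x) : ∃ s, c < stageZ U E s x :=
  (((hU.summable_weight hx hx1).hasSum.comp hE.tendsto_haltedPrograms).eventually_const_lt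
    hc).exists

theorem stageZ_eq_sum_map (hE : StageEnumeration U E) (s : ℕ) (x : ℝ) :
    stageZ U E s x = ((E s).map fun c => weight x c.1.length).sum := by
  have hdom (p : List Bool) (hp : p ∈ ((E s).map Prod.fst).toFinset) : p ∈ U.Dom := by
    obtain ⟨⟨p, o⟩, ho, rfl⟩ := List.mem_map.1 (List.mem_toFinset.1 hp)
    exact Part.dom_iff_mem.2 ⟨o, hE.sound ho⟩
  classical
  rw [stageZ, haltedPrograms, Finset.sum_subtype_of_mem (fun p => weight x p.length) hdom,
    List.sum_toFinset _ (hE.nodup s), List.map_map]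
  rfl

end StageEnumeration

theorem floor_two_pow_mul_weight_eq_findGreatest (l j n N : ℕ) :
    ⌊2 ^ N * weight ((j + 1) / 2 ^ n) l⌋₊ =
      Nat.findGreatest (fun r => r ^ (j + 1) * 2 ^ (l * 2 ^ n) ≤ 2 ^ (N * (j + 1))) (2 ^ N) := by
  have hw0 := weight_pos ((j + 1) / 2 ^ n) l
  have hw1 : weight ((j + 1) / 2 ^ n) l ≤ 1 :=
    Real.rpow_le_one_of_one_le_of_nonpos one_le_two
      (div_nonpos_of_nonpos_of_nonneg (neg_nonpos.2 l.cast_nonneg) (by positivity))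
  have hpow : weight ((j + 1) / 2 ^ n) l ^ (j + 1) * 2 ^ (l * 2 ^ n) = 1 := by
    rw [weight, ← Real.rpow_natCast, ← Real.rpow_mul two_pos.le, ← Real.rpow_natCast 2 (l * 2 ^ n),
      ← Real.rpow_add two_pos, ← Real.rpow_zero 2]
    congr 1
    push_cast
    field_simp
    ring
  have hiff (r : ℕ) : r ^ (j + 1) * 2 ^ (l * 2 ^ n) ≤ 2 ^ (N * (j + 1)) ↔
      r ≤ ⌊2 ^ N * weight ((j + 1) / 2 ^ n) l⌋₊ := by
    have hN : (2 : ℝ) ^ (N * (j + 1)) =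
        (2 ^ N * weight ((j + 1) / 2 ^ n) l) ^ (j + 1) * 2 ^ (l * 2 ^ n) := by
      rw [mul_pow, mul_assoc, hpow, mul_one, pow_mul]
    rw [Nat.le_floor_iff (by positivity), ← pow_le_pow_iff_left₀ (a := (r : ℝ))
      (by positivity) (by positivity) j.succ_ne_zero,
      ← mul_le_mul_iff_left₀ (show (0 : ℝ) < 2 ^ (l * 2 ^ n) by positivity), ← hN]
    exact_mod_cast Iff.rfl
  symm
  rw [Nat.findGreatest_eq_iff]
  refine ⟨?_, fun _ => (hiff _).2 le_rfl, fun r hr _ => ?_⟩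
  · exact Nat.floor_le_of_le (by push_cast; exact mul_le_of_le_one_right (by positivity) hw1)
  · rwa [hiff, not_le]

theorem primrec_floor_two_pow_mul_weight :
    Primrec fun x : ℕ × ℕ × ℕ × ℕ =>
      ⌊2 ^ x.2.2.2 * weight ((x.2.1 + 1) / 2 ^ x.2.2.1) x.1⌋₊ := by
  simp only [floor_two_pow_mul_weight_eq_findGreatest]
  have hl : Primrec fun x : (ℕ × ℕ × ℕ × ℕ) × ℕ => x.1.1 := Primrec.fst.comp Primrec.fst
  have htail : Primrec fun x : (ℕ × ℕ × ℕ × ℕ) × ℕ => x.1.2 := Primrec.snd.comp Primrec.fst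
  have hj : Primrec fun x : (ℕ × ℕ × ℕ × ℕ) × ℕ => x.1.2.1 + 1 :=
    Primrec.succ.comp (Primrec.fst.comp htail)
  have hn : Primrec fun x : (ℕ × ℕ × ℕ × ℕ) × ℕ => x.1.2.2.1 :=
    Primrec.fst.comp (Primrec.snd.comp htail)
  have hN : Primrec fun x : (ℕ × ℕ × ℕ × ℕ) × ℕ => x.1.2.2.2 :=
    Primrec.snd.comp (Primrec.snd.comp htail)
  refine Primrec.nat_findGreatest (p := fun (x : ℕ × ℕ × ℕ × ℕ) r =>
      r ^ (x.2.1 + 1) * 2 ^ (x.1 * 2 ^ x.2.2.1) ≤ 2 ^ (x.2.2.2 * (x.2.1 + 1)))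
    ?_ (Primrec.nat_le.comp ?_ ?_)
  · exact primrec_two_pow.comp (Primrec.snd.comp (Primrec.snd.comp Primrec.snd))
  · exact Primrec.nat_mul.comp (primrec_pow.comp Primrec.snd hj)
      (primrec_two_pow.comp (Primrec.nat_mul.comp hl (primrec_two_pow.comp hn)))
  · exact primrec_two_pow.comp (Primrec.nat_mul.comp hN hj)

/-- A computable lower approximation to `2 ^ N * stageZ U E s ((j + 1) / 2 ^ n)`, with one rounding
error per program. The successor keeps the temperature positive. -/
noncomputable def stageCount (E : ℕ → List (List Bool × List Bool)) (s j n N : ℕ) : ℕ :=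
  ((E s).map fun c => ⌊2 ^ N * weight ((j + 1) / 2 ^ n) c.1.length⌋₊).sum

theorem computable_stageCount {α : Type*} [Primcodable α]
    {E : ℕ → List (List Bool × List Bool)} (hE : Primrec E) {s j n N : α → ℕ}
    (hs : Computable s) (hj : Computable j) (hn : Computable n) (hN : Computable N) :
    Computable fun a => stageCount E (s a) (j a) (n a) (N a) := by
  have hsum : Primrec (List.sum (α := ℕ)) :=
    Primrec.list_foldr (h := fun _ p => p.1 + p.2) Primrec.id (Primrec.const 0)
      (Primrec.nat_add.comp (Primrec.fst.comp Primrec.snd) (Primrec.snd.comp Primrec.snd))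
  have hcount : Primrec fun x : ℕ × ℕ × ℕ × ℕ => stageCount E x.1 x.2.1 x.2.2.1 x.2.2.2 := by
    have hargs : Primrec fun x : (ℕ × ℕ × ℕ × ℕ) × List Bool × List Bool =>
        (x.2.1.length, x.1.2) :=
      (Primrec.list_length.comp (Primrec.fst.comp Primrec.snd)).pair
        (Primrec.snd.comp Primrec.fst)
    have hfloors := primrec_floor_two_pow_mul_weight.comp hargs
    have hmap := Primrec.list_map (hE.comp Primrec.fst) hfloors.to₂
    exact (hsum.comp hmap).of_eq fun _ => rfl
  exact (hcount.to_comp.comp (hs.pair (hj.pair (hn.pair hN)))).of_eq fun _ => rfl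

namespace StageEnumeration

variable {U : List Bool →. List Bool} {E : ℕ → List (List Bool × List Bool)}

theorem stageCount_le (hE : StageEnumeration U E) (s j n N : ℕ) :
    (stageCount E s j n N : ℝ) ≤ 2 ^ N * stageZ U E s ((j + 1) / 2 ^ n) := by
  rw [hE.stageZ_eq_sum_map, stageCount, ← List.sum_map_mul_left, Nat.cast_list_sum, List.map_map]
  exact List.sum_le_sum fun c _ =>
    Nat.floor_le (mul_nonneg (by positivity) (weight_pos _ _).le)

theorem le_stageCount_add (hE : StageEnumeration U E) (s j n N : ℕ) :
    2 ^ N * stageZ U E s ((j + 1) / 2 ^ n) ≤ stageCount E s j n N + s := by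
  have hlen : (((E s).map fun _ => (1 : ℝ)).sum) ≤ s := by
    simpa using hE.length_le s
  rw [hE.stageZ_eq_sum_map, stageCount, ← List.sum_map_mul_left, Nat.cast_list_sum, List.map_map]
  refine le_trans ?_ (add_le_add_right hlen _)
  rw [← List.sum_map_add]
  exact List.sum_le_sum fun c _ => (Nat.lt_floor_add_one _).le

theorem exists_lt_stageCount_iff (hE : StageEnumeration U E) {c : ℝ} {g : ℕ → ℕ}
    (hg : ∀ N, |c * 2 ^ N - g N| ≤ 2) (s j n : ℕ) :
    (∃ N, g N + 2 < stageCount E s j n N) ↔ c < stageZ U E s ((j + 1) / 2 ^ n) := by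
  constructor
  · rintro ⟨N, hN⟩
    have hN' : (g N : ℝ) + 2 < stageCount E s j n N := by exact_mod_cast hN
    refine lt_of_mul_lt_mul_left ?_ (show (0 : ℝ) ≤ 2 ^ N by positivity)
    linarith [(abs_le.1 (hg N)).2, hE.stageCount_le s j n N]
  · intro hc
    obtain ⟨N, hN⟩ := pow_unbounded_of_one_lt ((s + 4) / (stageZ U E s ((j + 1) / 2 ^ n) - c))
      (one_lt_two (α := ℝ))
    rw [div_lt_iff₀ (sub_pos.2 hc)] at hN
    refine ⟨N, ?_⟩
    have hlt : (g N : ℝ) + 2 < stageCount E s j n N := by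
      linarith [(abs_le.1 (hg N)).1, hE.le_stageCount_add s j n N]
    exact_mod_cast hlt

-- The search is over pairs of a stage and a precision, coded by a single number.
theorem exists_partrec_stage_search (hE : StageEnumeration U E) {α : Type*} [Primcodable α]
    {c : α → ℝ} {g : α → ℕ → ℕ} (hg : Computable₂ g) (hgc : ∀ a N, |c a * 2 ^ N - g a N| ≤ 2)
    {j n : α → ℕ} (hj : Computable j) (hn : Computable n) :
    ∃ σ : α →. ℕ, Partrec σ ∧ ∀ a,
      ((∃ s, c a < stageZ U E s ((j a + 1) / 2 ^ n a)) → (σ a).Dom) ∧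
      ∀ s ∈ σ a, c a < stageZ U E s ((j a + 1) / 2 ^ n a) := by
  let P (a : α) (u : ℕ) : Bool :=
    decide (g a u.unpair.2 + 2 < stageCount E u.unpair.1 (j a) (n a) u.unpair.2)
  have hP : Computable₂ P := by
    have hs : Computable fun x : α × ℕ => x.2.unpair.1 :=
      Computable.fst.comp (Computable.unpair.comp Computable.snd)
    have hN : Computable fun x : α × ℕ => x.2.unpair.2 :=
      Computable.snd.comp (Computable.unpair.comp Computable.snd)
    exact Primrec.nat_lt.decide.to_comp.comp
      (Primrec.nat_add.to_comp.comp (hg.comp Computable.fst hN) (Computable.const 2))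
      (computable_stageCount hE.primrec hs (hj.comp Computable.fst) (hn.comp Computable.fst) hN)
  refine ⟨fun a => (Nat.rfind fun u => Part.some (P a u)).map fun u => u.unpair.1,
    (Partrec.rfind hP.partrec₂).map
      (Computable.fst.comp (Computable.unpair.comp Computable.snd)).to₂,
    fun a => ⟨?_, ?_⟩⟩
  · rintro ⟨s, hs⟩
    obtain ⟨N, hN⟩ := (hE.exists_lt_stageCount_iff (hgc a) s (j a) (n a)).2 hs
    exact Nat.rfind_dom'.2 ⟨Nat.pair s N, by simpa [P] using hN, fun _ => trivial⟩
  · intro s hs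
    obtain ⟨u, hu, rfl⟩ := (Part.mem_map_iff _).1 hs
    exact (hE.exists_lt_stageCount_iff (hgc a) _ (j a) (n a)).1
      ⟨u.unpair.2, by simpa [P] using Nat.rfind_spec hu⟩

end StageEnumeration

/-! ### The lower bound -/

/-- An output produced by no program halted by stage `s`, being longer than all of theirs. -/
def freshOutput (E : ℕ → List (List Bool × List Bool)) (s : ℕ) : List Bool :=
  ((E s).map Prod.snd).flatten ++ [true]

theorem primrec_freshOutput {E : ℕ → List (List Bool × List Bool)} (hE : Primrec E) :
    Primrec (freshOutput E) :=
  Primrec.list_append.comp (Primrec.list_flatten.comp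
    (Primrec.list_map hE (Primrec.snd.comp Primrec.snd))) (Primrec.const _)

theorem le_of_weight_le {T : ℝ} (hT : 0 < T) {l k n : ℕ}
    (h : weight T l ≤ 2 ^ k * (1 / 2) ^ n) : T * (n - k) ≤ l := by
  have hpow : (2 : ℝ) ^ k * (1 / 2) ^ n = 2 ^ ((k : ℝ) - n) := by
    rw [Real.rpow_sub two_pos, Real.rpow_natCast, Real.rpow_natCast, one_div, inv_pow,
      div_eq_mul_inv]
  rw [weight, hpow, Real.rpow_le_rpow_left_iff one_lt_two, div_le_iff₀ hT] at h
  linarith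

theorem PrefixFree.exists_stageZ_sub_le {U : List Bool →. List Bool} (hU : PrefixFree U)
    {x y : ℝ} (hx : 0 < x) (hxy : x < y) (hy : y < 1) :
    ∃ C, ∀ E s u v, x ≤ u → u ≤ v → v ≤ y →
      stageZ U E s v - stageZ U E s u ≤ C * (v - u) := by
  obtain ⟨C, hC, hle⟩ := exists_weight_sub_le hx hxy hy
  refine ⟨C, fun E s u v hu huv hv => ?_⟩
  rw [stageZ, stageZ, ← Finset.sum_sub_distrib]
  calc ∑ p ∈ haltedPrograms U E s, (weight v p.1.length - weight u p.1.length)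
      ≤ ∑ p ∈ haltedPrograms U E s, C * (v - u) * weight 1 p.1.length :=
        Finset.sum_le_sum fun p _ => hle u v hu huv hv _
    _ = C * (v - u) * ∑ p ∈ haltedPrograms U E s, weight 1 p.1.length := by rw [Finset.mul_sum]
    _ ≤ C * (v - u) := mul_le_of_le_one_right
        (mul_nonneg hC.le (sub_nonneg.2 huv)) (hU.sum_weight_le_one _)

/-- The least multiple of `2 ^ (-n)` strictly above `T`, for `0 ≤ T`. -/
noncomputable def dyadicAbove (T : ℝ) (n : ℕ) : ℝ := (⌊T * 2 ^ n⌋₊ + 1) / 2 ^ n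

theorem lt_dyadicAbove (T : ℝ) (n : ℕ) : T < dyadicAbove T n :=
  (lt_div_iff₀ (by positivity)).2 (Nat.lt_floor_add_one _)

theorem dyadicAbove_sub_le {T : ℝ} (hT : 0 ≤ T) (n : ℕ) : dyadicAbove T n - T ≤ (1 / 2) ^ n := by
  have hfloor : (⌊T * 2 ^ n⌋₊ : ℝ) ≤ T * 2 ^ n := Nat.floor_le (by positivity)
  rw [dyadicAbove, sub_le_iff_le_add, div_le_iff₀ (by positivity), add_mul, ← mul_pow]
  norm_num
  linarith

theorem dyadicAbove_le_one {T : ℝ} (hT : T < 1) (n : ℕ) : dyadicAbove T n ≤ 1 := by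
  rw [dyadicAbove, div_le_one (by positivity)]
  exact_mod_cast floor_mul_two_pow_lt hT n

section LowerBound

variable {U : List Bool →. List Bool} {E : ℕ → List (List Bool × List Bool)} {T : ℝ}

theorem StageEnumeration.notMem_haltedPrograms (hE : StageEnumeration U E) {s : ℕ} {p : U.Dom}
    (hp : freshOutput E s ∈ U p.1) : p ∉ haltedPrograms U E s := by
  intro hmem
  obtain ⟨o, ho⟩ := mem_haltedPrograms.1 hmem
  have hlen : o.length ≤ ((E s).map Prod.snd).flatten.length :=
    (List.sublist_flatten_of_mem (List.mem_map_of_mem (f := Prod.snd) ho)).length_le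
  rw [← Part.mem_unique hp (hE.sound ho), freshOutput, List.length_append,
    List.length_singleton] at hlen
  exact Nat.not_succ_le_self _ hlen

theorem StageEnumeration.stageZ_add_weight_le (hE : StageEnumeration U E) (hU : OptimalMachine U)
    (hT0 : 0 < T) (hT1 : T ≤ 1) (s : ℕ) :
    stageZ U E s T + weight T (complexity U (freshOutput E s)) ≤ Zfun U T := by
  classical
  obtain ⟨p, hlen, hp⟩ := hU.exists_length_eq_complexity (freshOutput E s)
  let q : U.Dom := ⟨p, Part.dom_iff_mem.2 ⟨_, hp⟩⟩
  rw [Zfun_eq_tsum_weight, stageZ, ← hlen, add_comm,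
    ← Finset.sum_insert (f := fun p : U.Dom => weight T p.1.length) (a := q)
      (hE.notMem_haltedPrograms hp)]
  exact (hU.2.1.summable_weight hT0 hT1).sum_le_tsum _ fun _ _ => (weight_pos _ _).le

theorem StageEnumeration.exists_partrec_freshOutput (hE : StageEnumeration U E)
    (hU : OptimalMachine U) (hT0 : 0 < T) (hT1 : T < 1) {g : ℕ → ℕ} (hg : Computable g)
    (hgZ : ∀ n, |Zfun U T * 2 ^ n - g n| ≤ 2) :
    ∃ F : List Bool →. List Bool, Partrec F ∧ ∀ n, ∃ s,
      freshOutput E s ∈ F (firstBits T n) ∧ Zfun U T < stageZ U E s (dyadicAbove T n) := by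
  obtain ⟨σ, hσ, hspec⟩ := hE.exists_partrec_stage_search (α := List Bool)
    (c := fun _ => Zfun U T) (g := fun _ => g) (hg.comp Computable.snd) (fun _ => hgZ)
    primrec_ofBits.to_comp Computable.list_length
  refine ⟨fun w => (σ w).map (freshOutput E),
    hσ.map ((primrec_freshOutput hE.primrec).to_comp.comp Computable.snd).to₂, fun n => ?_⟩
  have htemp : ((ofBits (firstBits T n) : ℝ) + 1) / 2 ^ (firstBits T n).length =
      dyadicAbove T n := by
    rw [length_firstBits, firstBits_eq_toBits, Int.fract_eq_self.2 ⟨hT0.le, hT1⟩,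
      ofBits_toBits_of_lt (floor_mul_two_pow_lt hT1 n), dyadicAbove]
  obtain ⟨hdom, hlt⟩ := hspec (firstBits T n)
  rw [htemp] at hdom hlt
  obtain ⟨p, hp⟩ := hU.exists_dom_length_pos
  have hd0 : 0 < dyadicAbove T n := hT0.trans (lt_dyadicAbove T n)
  have hd1 := dyadicAbove_le_one hT1 n
  have hZlt : Zfun U T < Zfun U (dyadicAbove T n) :=
    tsum_weight_lt_tsum_weight (hU.2.1.summable_weight hd0 hd1) hd1 hp hT0 (lt_dyadicAbove T n)
  have hmem := Part.get_mem (hdom (hE.exists_lt_stageZ hU.2.1 hd0 hd1 hZlt))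
  exact ⟨_, Part.mem_map _ hmem, hlt _ hmem⟩

theorem OptimalMachine.weaklyChaitinTRandom_self (hU : OptimalMachine U) (hT0 : 0 < T)
    (hT1 : T < 1) (hZ : ComputableReal (Zfun U T)) : WeaklyChaitinTRandom U T T := by
  obtain ⟨E, hE⟩ := exists_stageEnumeration hU.1
  obtain ⟨g, hg, hgZ⟩ := hZ.exists_dyadic_approx (tsum_nonneg fun p => (weight_pos T _).le)
  obtain ⟨F, hF, hfresh⟩ := hE.exists_partrec_freshOutput hU hT0 hT1 hg hgZ
  obtain ⟨d, hd⟩ := hU.exists_complexity_le_of_partrec hF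
  obtain ⟨y, hTy, hy1⟩ := exists_between hT1
  obtain ⟨C, hC⟩ := hU.2.1.exists_stageZ_sub_le hT0 hTy hy1
  obtain ⟨n₀, hn₀⟩ := exists_pow_lt_of_lt_one (sub_pos.2 hTy) (one_half_lt_one (α := ℝ))
  obtain ⟨k, hk⟩ := pow_unbounded_of_one_lt C (one_lt_two (α := ℝ))
  have hlarge (n : ℕ) (hn : n₀ ≤ n) : T * (n - k) ≤ complexity U (firstBits T n) + d := by
    obtain ⟨s, hs, hlt⟩ := hfresh n
    have hy : dyadicAbove T n ≤ y := by
      linarith [dyadicAbove_sub_le hT0.le n,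
        pow_le_pow_of_le_one one_half_pos.le (one_half_lt_one (α := ℝ)).le hn]
    have hweight : weight T (complexity U (freshOutput E s)) ≤ 2 ^ k * (1 / 2) ^ n := by
      calc weight T (complexity U (freshOutput E s))
          ≤ stageZ U E s (dyadicAbove T n) - stageZ U E s T := by
            linarith [hE.stageZ_add_weight_le hU hT0 hT1.le s]
        _ ≤ C * (dyadicAbove T n - T) := hC E s _ _ le_rfl (lt_dyadicAbove T n).le hy
        _ ≤ 2 ^ k * (1 / 2) ^ n := mul_le_mul hk.le (dyadicAbove_sub_le hT0.le n)
            (sub_nonneg.2 (lt_dyadicAbove T n).le) (by positivity)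
    exact (le_of_weight_le hT0 hweight).trans (by exact_mod_cast hd _ _ hs)
  refine ⟨n₀ + k + d, fun n => ?_⟩
  have hTk : T * k ≤ k := mul_le_of_le_one_left k.cast_nonneg hT1.le
  push_cast
  rcases le_total n₀ n with hn | hn
  · linarith [hlarge n hn, n₀.cast_nonneg (α := ℝ)]
  · have hTn : T * (n : ℝ) ≤ n₀ :=
      (mul_le_of_le_one_left (Nat.cast_nonneg _) hT1.le).trans (by exact_mod_cast hn)
    linarith [k.cast_nonneg (α := ℝ), d.cast_nonneg (α := ℝ),
      (complexity U (firstBits T n)).cast_nonneg (α := ℝ)]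

end LowerBound

/-! ### The upper bound -/

theorem exists_lt_two_pow_div_lt_le {x : ℝ} (hx0 : 0 < x) (hx1 : x ≤ 1) (m : ℕ) :
    ∃ v : ℕ, v < 2 ^ m ∧ v / 2 ^ m < x ∧ x ≤ v / 2 ^ m + (1 / 2) ^ m := by
  have hpow : (0 : ℝ) < 2 ^ m := by positivity
  have hceil : 0 < ⌈x * 2 ^ m⌉₊ := Nat.ceil_pos.2 (by positivity)
  obtain ⟨v, hv⟩ := Nat.exists_eq_succ_of_ne_zero hceil.ne'
  have hlt : (v : ℝ) < x * 2 ^ m := Nat.lt_ceil.1 (hv ▸ v.lt_succ_self)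
  have hle : x * 2 ^ m ≤ v + 1 := by exact_mod_cast hv ▸ Nat.le_ceil (x * 2 ^ m)
  refine ⟨v, ?_, (div_lt_iff₀ hpow).2 hlt, ?_⟩
  · exact_mod_cast hlt.trans_le (mul_le_of_le_one_left hpow.le hx1)
  · rwa [one_div, inv_pow, ← one_div, ← add_div, le_div_iff₀ hpow]

theorem abs_div_mul_sub_div_le (v m N : ℕ) :
    |(v : ℝ) / 2 ^ m * 2 ^ N - (v * 2 ^ N / 2 ^ m : ℕ)| ≤ 2 := by
  have hfloor : (v * 2 ^ N / 2 ^ m : ℕ) = ⌊(v : ℝ) / 2 ^ m * 2 ^ N⌋₊ := by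
    rw [div_mul_eq_mul_div]
    exact_mod_cast (Nat.floor_div_eq_div (K := ℝ) (v * 2 ^ N) (2 ^ m)).symm
  rw [hfloor, abs_le]
  constructor <;> linarith [Nat.floor_le (show 0 ≤ (v : ℝ) / 2 ^ m * 2 ^ N by positivity),
    Nat.lt_floor_add_one ((v : ℝ) / 2 ^ m * 2 ^ N)]

theorem weight_le_one_half_pow {T : ℝ} (hT : 0 < T) {m n : ℕ} (h : T * n ≤ m) :
    weight T m ≤ (1 / 2) ^ n := by
  rw [weight, one_div, inv_pow, ← Real.rpow_natCast, ← Real.rpow_neg two_pos.le, neg_div]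
  refine Real.rpow_le_rpow_of_exponent_le one_le_two (neg_le_neg ?_)
  rwa [le_div_iff₀' hT]

section UpperBound

variable {U : List Bool →. List Bool} {E : ℕ → List (List Bool × List Bool)} {T : ℝ}

theorem OptimalMachine.Zfun_one_pos (hU : OptimalMachine U) : 0 < Zfun U 1 := by
  obtain ⟨p, -⟩ := hU.exists_dom_length_pos
  exact (hU.2.1.summable_weight one_pos le_rfl).tsum_pos (fun _ => (weight_pos 1 _).le) p
    (weight_pos 1 _)

theorem PrefixFree.Zfun_one_le_one (hU : PrefixFree U) : Zfun U 1 ≤ 1 :=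
  Real.tsum_le_of_sum_le (fun _ => (weight_pos 1 _).le) hU.sum_weight_le_one

theorem StageEnumeration.exists_partrec_stage_of_bits (hE : StageEnumeration U E)
    (hU : OptimalMachine U) : ∃ σ : ℕ × ℕ →. ℕ, Partrec σ ∧ ∀ m, ∃ v < 2 ^ m, ∃ s ∈ σ (m, v),
      Zfun U 1 ≤ stageZ U E s 1 + (1 / 2) ^ m := by
  have hg : Computable₂ fun (x : ℕ × ℕ) N => x.2 * 2 ^ N / 2 ^ x.1 :=
    (Primrec.nat_div.comp (Primrec.nat_mul.comp (Primrec.snd.comp Primrec.fst)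
      (primrec_two_pow.comp Primrec.snd))
      (primrec_two_pow.comp (Primrec.fst.comp Primrec.fst))).to_comp
  obtain ⟨σ, hσ, hspec⟩ := hE.exists_partrec_stage_search (α := ℕ × ℕ)
    (c := fun x => x.2 / 2 ^ x.1) hg (fun x => abs_div_mul_sub_div_le x.2 x.1)
    (Computable.const 0) (Computable.const 0)
  refine ⟨σ, hσ, fun m => ?_⟩
  obtain ⟨v, hv, hlt, hle⟩ := exists_lt_two_pow_div_lt_le hU.Zfun_one_pos hU.2.1.Zfun_one_le_one m
  obtain ⟨hdom, hsound⟩ := hspec (m, v)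
  norm_num only [Nat.cast_zero, zero_add, pow_zero, div_one] at hdom hsound
  have hmem := Part.get_mem (hdom (hE.exists_lt_stageZ hU.2.1 one_pos le_rfl hlt))
  exact ⟨v, hv, _, hmem, by linarith [hsound _ hmem]⟩

theorem StageEnumeration.le_stageCount_add_of_le (hE : StageEnumeration U E) {c : ℝ} {g : ℕ → ℕ}
    (hg : ∀ N, |c * 2 ^ N - g N| ≤ 2) {s j n : ℕ}
    (h : c ≤ stageZ U E s ((j + 1) / 2 ^ n) + (1 / 2) ^ n) :
    g (n + s) ≤ stageCount E s j n (n + s) + (2 * 2 ^ s + 2) := by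
  have hscaled := mul_le_mul_of_nonneg_left h (show (0 : ℝ) ≤ 2 ^ (n + s) by positivity)
  have hslack : (2 : ℝ) ^ (n + s) * (1 / 2) ^ n = 2 ^ s := by
    rw [pow_add, mul_right_comm, ← mul_pow, mul_one_div_cancel two_ne_zero, one_pow, one_mul]
  have hs : (s : ℝ) ≤ 2 ^ s := by exact_mod_cast s.lt_two_pow_self.le
  have hle : (g (n + s) : ℝ) ≤ stageCount E s j n (n + s) + (2 * 2 ^ s + 2) := by
    linarith [(abs_le.1 (hg (n + s))).1, hE.le_stageCount_add s j n (n + s)]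
  exact_mod_cast hle

theorem StageEnumeration.le_of_le_stageCount_add (hE : StageEnumeration U E) {c : ℝ} {g : ℕ → ℕ}
    (hg : ∀ N, |c * 2 ^ N - g N| ≤ 2) {s j n : ℕ}
    (h : g (n + s) ≤ stageCount E s j n (n + s) + (2 * 2 ^ s + 2)) :
    c ≤ stageZ U E s ((j + 1) / 2 ^ n) + 6 * (1 / 2) ^ n := by
  have hle : (g (n + s) : ℝ) ≤ stageCount E s j n (n + s) + (2 * 2 ^ s + 2) := by
    exact_mod_cast h
  have hslack : (2 : ℝ) ^ (n + s) * (1 / 2) ^ n = 2 ^ s := by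
    rw [pow_add, mul_right_comm, ← mul_pow, mul_one_div_cancel two_ne_zero, one_pow, one_mul]
  have hs : (1 : ℝ) ≤ 2 ^ s := one_le_pow₀ one_le_two
  refine le_of_mul_le_mul_left ?_ (show (0 : ℝ) < 2 ^ (n + s) by positivity)
  linarith [(abs_le.1 (hg (n + s))).2, hE.stageCount_le s j n (n + s)]

theorem OptimalMachine.exists_floor_le_add (hU : OptimalMachine U) (hT0 : 0 < T) (hT1 : T ≤ 1)
    {B : ℝ} (hB : 0 ≤ B) : ∃ C : ℕ, ∀ E (s j n : ℕ),
      Zfun U T ≤ stageZ U E s ((j + 1) / 2 ^ n) + B * (1 / 2) ^ n → ⌊T * 2 ^ n⌋₊ ≤ j + C := by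
  obtain ⟨p, hp⟩ := hU.exists_dom_length_pos
  obtain ⟨κ, hκ, hslope⟩ :=
    exists_mul_sub_le_tsum_weight_sub (hU.2.1.summable_weight hT0 hT1) hT1 hp
  refine ⟨1 + ⌈B / κ⌉₊, fun E s j n h => ?_⟩
  have hpow : (0 : ℝ) < 2 ^ n := by positivity
  have hx0 : (0 : ℝ) < (j + 1) / 2 ^ n := by positivity
  have hgap : T - (j + 1) / 2 ^ n ≤ B / κ * (1 / 2) ^ n := by
    rcases le_total T ((j + 1) / 2 ^ n) with hTx | hxT
    · exact (sub_nonpos.2 hTx).trans (mul_nonneg (div_nonneg hB hκ.le) (by positivity))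
    · rw [div_mul_eq_mul_div, le_div_iff₀' hκ]
      have hZ := hU.2.1.stageZ_le_Zfun E s hx0 (hxT.trans hT1)
      rw [Zfun_eq_tsum_weight] at h hZ
      linarith [hslope _ hx0 hxT]
  have hfloor : (⌊T * 2 ^ n⌋₊ : ℝ) ≤ j + (1 + ⌈B / κ⌉₊) := by
    have hscaled := mul_le_mul_of_nonneg_right hgap hpow.le
    rw [sub_mul, div_mul_cancel₀ _ hpow.ne', mul_assoc, ← mul_pow,
      one_div_mul_cancel two_ne_zero, one_pow, mul_one] at hscaled
    linarith [Nat.floor_le (show 0 ≤ T * 2 ^ n by positivity), Nat.le_ceil (B / κ)]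
  exact_mod_cast hfloor

theorem StageEnumeration.exists_partrec_temperature_search (hE : StageEnumeration U E)
    (hU : OptimalMachine U) (hT0 : 0 < T) (hT1 : T ≤ 1) {g : ℕ → ℕ} (hg : Computable g)
    (hgZ : ∀ n, |Zfun U T * 2 ^ n - g n| ≤ 2) :
    ∃ τ : ℕ × ℕ →. ℕ, Partrec τ ∧ ∃ C : ℕ, ∀ n s, Zfun U T ≤ stageZ U E s T + (1 / 2) ^ n →
      ∃ j ∈ τ (n, s), j ≤ ⌊T * 2 ^ n⌋₊ ∧ ⌊T * 2 ^ n⌋₊ ≤ j + C := by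
  let P (x : ℕ × ℕ) (j : ℕ) : Bool :=
    decide (g (x.1 + x.2) ≤ stageCount E x.2 j x.1 (x.1 + x.2) + (2 * 2 ^ x.2 + 2))
  have hP : Computable₂ P := by
    have hn : Computable fun x : (ℕ × ℕ) × ℕ => x.1.1 := Computable.fst.comp Computable.fst
    have hs : Computable fun x : (ℕ × ℕ) × ℕ => x.1.2 := Computable.snd.comp Computable.fst
    have hN := Primrec.nat_add.to_comp.comp hn hs
    have hslack : Primrec fun s => 2 * 2 ^ s + 2 := Primrec.nat_add.comp
      (Primrec.nat_mul.comp (Primrec.const 2) primrec_two_pow) (Primrec.const 2)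
    exact Primrec.nat_le.decide.to_comp.comp (hg.comp hN) (Primrec.nat_add.to_comp.comp
      (computable_stageCount hE.primrec hs Computable.snd hn hN) (hslack.to_comp.comp hs))
  obtain ⟨C, hC⟩ := hU.exists_floor_le_add hT0 hT1 (show (0 : ℝ) ≤ 6 by norm_num)
  refine ⟨fun x => Nat.rfind fun j => Part.some (P x j), Partrec.rfind hP.partrec₂, C,
    fun n s h => ?_⟩
  have hfound : P (n, s) ⌊T * 2 ^ n⌋₊ = true := decide_eq_true <|
    hE.le_stageCount_add_of_le hgZ <| h.trans <| add_le_add_left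
      (stageZ_le_stageZ U E s hT0 (lt_dyadicAbove T n).le) _
  obtain ⟨j, hj, hle⟩ := Nat.rfind_min' hfound
  have hPj : P (n, s) j = true := (Part.mem_some_iff.1 (Nat.rfind_spec hj)).symm
  exact ⟨j, hj, hle, hC E s j n (hE.le_of_le_stageCount_add hgZ (of_decide_eq_true hPj))⟩

theorem OptimalMachine.exists_complexity_toBits_le (hU : OptimalMachine U) (hT0 : 0 < T)
    (hT1 : T ≤ 1) (hZ : ComputableReal (Zfun U T)) {K a : ℕ} (ha : T * K ≤ a) :
    ∃ C d : ℕ, ∀ k, ∃ j, complexity U (toBits (K * k) j) ≤ k * (a + 1) + d ∧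
      j ≤ ⌊T * 2 ^ (K * k)⌋₊ ∧ ⌊T * 2 ^ (K * k)⌋₊ ≤ j + C := by
  obtain ⟨E, hE⟩ := exists_stageEnumeration hU.1
  obtain ⟨g, hg, hgZ⟩ := hZ.exists_dyadic_approx (tsum_nonneg fun p => (weight_pos T _).le)
  obtain ⟨σ, hσ, hstage⟩ := hE.exists_partrec_stage_of_bits hU
  obtain ⟨τ, hτ, C, htemp⟩ := hE.exists_partrec_temperature_search hU hT0 hT1 hg hgZ
  let F (x : ℕ × ℕ) : Part (List Bool) := (σ (a * x.1, x.2)).bind fun s =>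
    (τ (K * x.1, s)).map (toBits (K * x.1))
  have hF : Partrec F := by
    have hmul (b : ℕ) : Computable fun k => b * k :=
      (Primrec.nat_mul.comp (Primrec.const b) Primrec.id).to_comp
    have hK : Computable fun x : (ℕ × ℕ) × ℕ => K * x.1.1 :=
      (hmul K).comp (Computable.fst.comp Computable.fst)
    exact (hσ.comp (((hmul a).comp Computable.fst).pair Computable.snd)).bind
      ((hτ.comp (hK.pair Computable.snd)).map
        (primrec_toBits.to_comp.comp (hK.comp Computable.fst) Computable.snd).to₂).to₂
  obtain ⟨d, hd⟩ := hU.exists_program_of_partrec_block a hF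
  refine ⟨C, d, fun k => ?_⟩
  obtain ⟨v, hv, s, hs, hZ1⟩ := hstage (a * k)
  have hm : T * (K * k : ℕ) ≤ (a * k : ℕ) := by
    push_cast
    rw [← mul_assoc]
    exact mul_le_mul_of_nonneg_right ha k.cast_nonneg
  have hZT : Zfun U T ≤ stageZ U E s T + (1 / 2) ^ (K * k) := by
    rw [← weight_one (a * k)] at hZ1
    exact (tsum_weight_le_sum_add_weight hT0 hT1
      (hU.2.1.summable_weight one_pos le_rfl) hZ1).trans
      (add_le_add_right (weight_le_one_half_pow hT0 hm) _)
  obtain ⟨j, hj, hle, hge⟩ := htemp (K * k) s hZT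
  obtain ⟨p, hp, hlen⟩ := hd k v _ hv (Part.mem_bind hs (Part.mem_map _ hj))
  exact ⟨j, (complexity_le hp).trans hlen, hle, hge⟩

theorem OptimalMachine.exists_complexity_le_of_partrec_family (hU : OptimalMachine U)
    {F : ℕ → List Bool →. List Bool} (hF : ∀ e, Partrec (F e)) (C : ℕ) :
    ∃ d, ∀ e ≤ C, ∀ s t, t ∈ F e s → complexity U t ≤ complexity U s + d := by
  choose d hd using fun e => hU.exists_complexity_le_of_partrec (hF e)
  refine ⟨(Finset.range (C + 1)).sup d, fun e he s t ht => (hd e s t ht).trans ?_⟩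
  exact Nat.add_le_add_left (Finset.le_sup (Finset.mem_range.2 (Nat.lt_succ_of_le he))) _

theorem OptimalMachine.exists_complexity_firstBits_mul_le (hU : OptimalMachine U) (hT0 : 0 < T)
    (hT1 : T < 1) (hZ : ComputableReal (Zfun U T)) {K a : ℕ} (ha : T * K ≤ a) :
    ∃ d, ∀ k, complexity U (firstBits T (K * k)) ≤ k * (a + 1) + d := by
  obtain ⟨C, d, hj⟩ := hU.exists_complexity_toBits_le hT0 hT1.le hZ ha
  have hadd (e : ℕ) : Computable fun w : List Bool => toBits w.length (ofBits w + e) :=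
    (primrec_toBits.comp Primrec.list_length
      (Primrec.nat_add.comp primrec_ofBits (Primrec.const e))).to_comp
  obtain ⟨d', hd'⟩ := hU.exists_complexity_le_of_partrec_family (fun e => (hadd e).partrec) C
  refine ⟨d + d', fun k => ?_⟩
  obtain ⟨j, hcomplexity, hle, hge⟩ := hj k
  have hbits : firstBits T (K * k) ∈
      (Part.some (toBits (toBits (K * k) j).length
        (ofBits (toBits (K * k) j) + (⌊T * 2 ^ (K * k)⌋₊ - j))) : Part (List Bool)) := by
    rw [length_toBits, ofBits_toBits_of_lt (hle.trans_lt (floor_mul_two_pow_lt hT1 _)),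
      Nat.add_sub_cancel' hle, firstBits_eq_toBits, Int.fract_eq_self.2 ⟨hT0.le, hT1⟩]
    exact Part.mem_some _
  linarith [hd' _ (Nat.sub_le_iff_le_add'.2 hge) _ _ hbits]

theorem OptimalMachine.exists_complexity_firstBits_le (hU : OptimalMachine U) (hT0 : 0 < T)
    (hT1 : T < 1) (hZ : ComputableReal (Zfun U T)) {K : ℕ} (hK : 0 < K) :
    ∃ d : ℕ, ∀ n : ℕ,
      (complexity U (firstBits T n) : ℝ) ≤ ((n : ℝ) / K + 1) * (T * K + 2) + d := by
  obtain ⟨d, hd⟩ := hU.exists_complexity_firstBits_mul_le hT0 hT1 hZ (Nat.le_ceil (T * K))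
  have htake (r : ℕ) : Computable fun w : List Bool => w.take (w.length - r) :=
    (Primrec.list_take.comp (Primrec.nat_sub.comp Primrec.list_length (Primrec.const r))
      Primrec.id).to_comp
  obtain ⟨d', hd'⟩ := hU.exists_complexity_le_of_partrec_family (fun r => (htake r).partrec) K
  refine ⟨d + d', fun n => ?_⟩
  have hn : n ≤ K * (n / K + 1) := (Nat.lt_mul_div_succ n hK).le
  have hbits : firstBits T n ∈ (Part.some ((firstBits T (K * (n / K + 1))).take
      ((firstBits T (K * (n / K + 1))).length - (K * (n / K + 1) - n))) : Part (List Bool)) := by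
    rw [length_firstBits, Nat.sub_sub_self hn, take_firstBits T hn]
    exact Part.mem_some _
  have hr : K * (n / K + 1) - n ≤ K := by
    rw [Nat.mul_succ, Nat.sub_le_iff_le_add']
    exact Nat.add_le_add_right (Nat.mul_div_le n K) K
  have hle : (complexity U (firstBits T n) : ℝ) ≤
      ((n / K : ℕ) + 1) * (⌈T * K⌉₊ + 1) + (d + d' : ℕ) := by
    exact_mod_cast (hd' _ hr _ _ hbits).trans
      ((Nat.add_le_add_right (hd (n / K + 1)) d').trans_eq (Nat.add_assoc _ _ _))
  refine hle.trans (add_le_add_left (mul_le_mul ?_ ?_ (by positivity) (by positivity)) _)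
  · exact add_le_add_left Nat.cast_div_le 1
  · linarith [Nat.ceil_lt_add_one (show 0 ≤ T * K by positivity)]

end UpperBound

/-! ### The compression rate -/

theorem WeaklyChaitinTRandom.eventually_lt_complexity_div {U : List Bool →. List Bool} {T α b : ℝ}
    (h : WeaklyChaitinTRandom U T α) (hb : b < T) :
    ∀ᶠ n : ℕ in atTop, b < (complexity U (firstBits α n) : ℝ) / n := by
  obtain ⟨c, hc⟩ := h
  filter_upwards [(tendsto_const_div_atTop_nhds_zero_nat (c : ℝ)).eventually_lt_const
    (sub_pos.2 hb), eventually_gt_atTop 0] with n hcn hn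
  have hnpos : (0 : ℝ) < n := Nat.cast_pos.2 hn
  have hle : T * n - c ≤ complexity U (firstBits α n) := hc ⟨n, hn⟩
  rw [div_lt_iff₀ hnpos] at hcn
  rw [lt_div_iff₀ hnpos]
  linarith

theorem OptimalMachine.eventually_complexity_div_lt {U : List Bool →. List Bool} {T b : ℝ}
    (hU : OptimalMachine U) (hT0 : 0 < T) (hT1 : T < 1) (hZ : ComputableReal (Zfun U T))
    (hb : T < b) : ∀ᶠ n : ℕ in atTop, (complexity U (firstBits T n) : ℝ) / n < b := by
  have hgap : 0 < b - T := sub_pos.2 hb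
  obtain ⟨K, hK⟩ := exists_nat_gt (4 / (b - T))
  have hKpos : (0 : ℝ) < K := (div_pos four_pos hgap).trans hK
  obtain ⟨d, hd⟩ := hU.exists_complexity_firstBits_le hT0 hT1 hZ (Nat.cast_pos.1 hKpos)
  have hrate : 2 / (K : ℝ) < (b - T) / 2 := by
    rw [div_lt_iff₀ hgap] at hK
    rw [div_lt_iff₀ hKpos]
    linarith
  filter_upwards [(tendsto_const_div_atTop_nhds_zero_nat (T * K + 2 + d)).eventually_lt_const
    (half_pos hgap), eventually_gt_atTop 0] with n hconst hn
  have : (0 : ℝ) < n := Nat.cast_pos.2 hn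
  calc (complexity U (firstBits T n) : ℝ) / n
      ≤ (((n : ℝ) / K + 1) * (T * K + 2) + d) / n := by gcongr; exact hd n
    _ = T + 2 / K + (T * K + 2 + d) / n := by field_simp; ring
    _ < b := by linarith

theorem fixed_point_by_partition_function (U : List Bool →. List Bool)
    (hU : OptimalMachine U) (T : ℝ) (hT0 : 0 < T) (hT1 : T < 1)
    (hZ : ComputableReal (Zfun U T)) :
    WeaklyChaitinTRandom U T T ∧ TCompressible U T T ∧
      Filter.Tendsto (fun n : ℕ => (complexity U (firstBits T n) : ℝ) / (n : ℝ))
        Filter.atTop (nhds T) := by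
  have hrandom : WeaklyChaitinTRandom U T T := hU.weaklyChaitinTRandom_self hT0 hT1 hZ
  have hlim : Tendsto (fun n : ℕ => (complexity U (firstBits T n) : ℝ) / n) atTop (nhds T) :=
    tendsto_order.2 ⟨fun _ hb => hrandom.eventually_lt_complexity_div hb,
      fun _ hb => hU.eventually_complexity_div_lt hT0 hT1 hZ hb⟩
  exact ⟨hrandom, hlim.limsup_eq.le, hlim⟩
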